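/- Let X_n = (ℂ^n, ‖·‖) be an n-dimensional Banach space in which the standard unit vectors form a 1-unconditional basis, and let m ≥ 2. Then the Gordon–Lewis constant of the space of m-homogeneous polynomials satisfies gl(𝒫(^m X_n)) ≤ 2 · (m^m/m!)² · λ(𝒫(^{m-1} X_n)), where λ denotes the projection constant. -/

import Mathlib

open Finset MeasureTheory

/-- Coefficient space of `m`-homogeneous polynomials on `ℂ^n`: families of complex
numbers indexed by the multi-indices `α` with `|α| = m`. -/
abbrev Coef (n m : ℕ) :=
  { α : Fin n → ℕ // α ∈ Finset.Nat.antidiagonalTuple n m } → ℂ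

/-- Evaluation of the `m`-homogeneous polynomial `∑_{|α|=m} a_α z^α` at `z ∈ ℂ^n`. -/
noncomputable def evalC {n m : ℕ} (a : Coef n m) (z : Fin n → ℂ) : ℂ :=
  ∑ α : { α : Fin n → ℕ // α ∈ Finset.Nat.antidiagonalTuple n m },
    a α * ∏ i, z i ^ (α : Fin n → ℕ) i

/-- The norm of an `m`-homogeneous polynomial on `X = (ℂ^n, ν)`:
`‖P‖ = sup_{ν(z) ≤ 1} |P(z)|`. -/
noncomputable def polyNorm (n m : ℕ) (ν : (Fin n → ℂ) → ℝ) (a : Coef n m) : ℝ :=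
  sSup {x : ℝ | ∃ z : Fin n → ℂ, ν z ≤ 1 ∧ x = ‖evalC a z‖}

/-- The operator norm of a linear map `T : V → W` relative to given norms on `V`, `W`. -/
noncomputable def opNormWith {V W : Type*} [AddCommGroup V] [Module ℂ V]
    [AddCommGroup W] [Module ℂ W] (νV : V → ℝ) (νW : W → ℝ) (T : V →ₗ[ℂ] W) : ℝ :=
  sSup {x : ℝ | ∃ v, νV v ≤ 1 ∧ x = νW (T v)}

/-- The 1-summing norm `π₁(T)` of a linear map `T : V → W` relative to given norms
on `V`, `W`. -/
noncomputable def pi1With {V W : Type*} [AddCommGroup V] [Module ℂ V]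
    [AddCommGroup W] [Module ℂ W] (νV : V → ℝ) (νW : W → ℝ) (T : V →ₗ[ℂ] W) : ℝ :=
  sSup {s : ℝ | ∃ (N : ℕ) (v : Fin N → V),
    (∀ lam : Fin N → ℂ, (∀ i, ‖lam i‖ ≤ 1) → νV (∑ i, lam i • v i) ≤ 1) ∧
    s = ∑ i, νW (T (v i))}

/-- The Gordon–Lewis constant of `(V, νV)`: the smallest `c ≥ 0` such that every operator
`T : V → ℓ₂^k` factors as `T = S ∘ R` through some `L₁(μ)` with `‖R‖·‖S‖ ≤ c·π₁(T)`. -/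
noncomputable def glWith (V : Type*) [AddCommGroup V] [Module ℂ V] (νV : V → ℝ) : ℝ :=
  sInf {c : ℝ | 0 ≤ c ∧ ∀ (k : ℕ) (T : V →ₗ[ℂ] EuclideanSpace ℂ (Fin k)),
    ∃ (Ω : Type) (_ : MeasurableSpace Ω) (μ : Measure Ω)
      (R : V →ₗ[ℂ] Lp ℂ 1 μ) (S : Lp ℂ 1 μ →L[ℂ] EuclideanSpace ℂ (Fin k)),
      (∀ v, S (R v) = T v) ∧
      opNormWith νV (fun f => ‖f‖) R * ‖S‖
        ≤ c * pi1With νV (fun w => ‖w‖) T}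

/-- The projection constant of `(V, νV)`: the supremum, over all isometric linear
embeddings `I : V → Z` into Banach spaces `Z`, of the infimum of `‖P‖` over all bounded
linear projections `P` of `Z` onto `I(V)`. -/
noncomputable def projConstWith (V : Type*) [AddCommGroup V] [Module ℂ V]
    (νV : V → ℝ) : ℝ :=
  sSup {x : ℝ |
    ∃ (Z : Type) (_iZ : NormedAddCommGroup Z) (_iS : NormedSpace ℂ Z) (I : V →ₗ[ℂ] Z),
      (∀ v, ‖I v‖ = νV v) ∧
      x = sInf {c : ℝ | ∃ P : Z →L[ℂ] Z,
        (∀ v, P (I v) = I v) ∧ (∀ z, ∃ v, P z = I v) ∧ c = ‖P‖}}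

/- Restriction to the unit ball embeds `𝒫(^m X)` isometrically into `ℓ^∞(B_X)`. Up to `1 + δ`,
finitely many points `x_j ∈ B_X` suffice to compute the norm, so polynomials are recovered from
their samples by a linear map `W` on a finite `ℓ^∞` with `‖W‖ ≤ (1 + δ) λ(𝒫(^m X))`. Together with
Euler's identity `(m + 1) P = ∑ z_k ∂_k P` this gives, with `δ_j` the unit vectors,
`P = ∑_{k,j} (m + 1)⁻¹ ∂_k P(x_j) · z_k W(δ_j)` for every `P ∈ 𝒫(^(m+1) X)`.
This frame is unconditional with constant `e ‖W‖`: by the 1-unconditionality of the basis the signs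
may be moved onto `z`, and then Cauchy's estimate bounds the directional derivatives of `P` on
`B_X` by `(m + 1) e ‖P‖`. A space with a `K`-unconditional frame has Gordon–Lewis constant at most
`K`, the factorization going through a weighted finite `ℓ¹`. Hence
`gl(𝒫(^(m+1) X)) ≤ e λ(𝒫(^m X))`, and `e ≤ 2 (m^m / m!)²` because `m^m / m! ≥ 2` for `m ≥ 2`. -/

open scoped lp ENNReal

section HahnBanach

variable {𝕜 V E X : Type*} [RCLike 𝕜] [AddCommGroup V] [Module 𝕜 V]

lemma exists_norm_le_mul_seminorm [FiniteDimensional 𝕜 V] [NormedAddCommGroup E]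
    [NormedSpace 𝕜 E] (q : Seminorm 𝕜 V) (hq : ∀ v, q v = 0 → v = 0) (f : V →ₗ[𝕜] E) :
    ∃ C : ℝ, 0 ≤ C ∧ ∀ v, ‖f v‖ ≤ C * q v := by
  let _ : NormedAddCommGroup V := AddGroupNorm.toNormedAddCommGroup
    { q.toAddGroupSeminorm with eq_zero_of_map_eq_zero' := hq }
  let _ : NormedSpace 𝕜 V := ⟨fun c v => (map_smul_eq_mul q c v).le⟩
  exact ⟨‖f.toContinuousLinearMap‖, norm_nonneg _, f.toContinuousLinearMap.le_opNorm⟩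

variable [SeminormedAddCommGroup E] [NormedSpace 𝕜 E]

lemma exists_extension_along (A : V →ₗ[𝕜] E) (f : V →ₗ[𝕜] 𝕜) {C : ℝ} (hC : 0 ≤ C)
    (hf : ∀ v, ‖f v‖ ≤ C * ‖A v‖) :
    ∃ g : E →ₗ[𝕜] 𝕜, (∀ v, g (A v) = f v) ∧ ∀ z, ‖g z‖ ≤ C * ‖z‖ := by
  let p : Seminorm 𝕜 E := C.toNNReal • normSeminorm 𝕜 E
  have hp (z : E) : p z = C * ‖z‖ := by
    rw [← Real.coe_toNNReal C hC]; rfl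
  obtain ⟨r, hr⟩ := A.rangeRestrict.exists_rightInverse_of_surjective A.range_rangeRestrict
  have hAr (x : A.range) : A (r x) = x := congrArg Subtype.val (LinearMap.congr_fun hr x)
  obtain ⟨g, hgr, hg⟩ := Module.Dual.exists_extension_of_le_seminorm A.range (f ∘ₗ r) (p := p)
    fun x => (hf (r x)).trans_eq (by rw [hAr, hp])
  refine ⟨g, fun v => ?_, fun z => (hg z).trans_eq (hp z)⟩
  have hrv : ‖f (r (A.rangeRestrict v) - v)‖ ≤ 0 := by
    simpa only [map_sub, hAr, LinearMap.codRestrict_apply, sub_self, norm_zero, mul_zero]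
      using hf (r (A.rangeRestrict v) - v)
  rw [norm_le_zero_iff, map_sub, sub_eq_zero] at hrv
  exact (hgr (A.rangeRestrict v)).trans hrv

/-- The linear map into `ℓ^∞` whose coordinates are the pointwise bounded functionals `g x`. -/
noncomputable def lpInftyPi (g : X → V →ₗ[𝕜] 𝕜)
    (hg : ∀ v, BddAbove (Set.range fun x => ‖g x v‖)) : V →ₗ[𝕜] ℓ^∞(X, 𝕜) where
  toFun v := ⟨fun x => g x v, memℓp_infty (hg v)⟩
  map_add' v w := by ext x; exact map_add (g x) v w
  map_smul' c v := by ext x; exact map_smul (g x) c v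

lemma exists_lp_infty_extension_along (A : V →ₗ[𝕜] E) (F : V →ₗ[𝕜] ℓ^∞(X, 𝕜)) {C : ℝ}
    (hC : 0 ≤ C) (hF : ∀ v, ‖F v‖ ≤ C * ‖A v‖) :
    ∃ G : E →ₗ[𝕜] ℓ^∞(X, 𝕜), (∀ v, G (A v) = F v) ∧ ∀ z, ‖G z‖ ≤ C * ‖z‖ := by
  have coordinate (x : X) := exists_extension_along A
    (lp.evalₗ (fun _ : X => 𝕜) ∞ x ∘ₗ F) hC fun v =>
      (lp.norm_apply_le_norm ENNReal.top_ne_zero (F v) x).trans (hF v)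
  choose g hgA hg using coordinate
  exact ⟨lpInftyPi g fun z => ⟨C * ‖z‖, Set.forall_mem_range.2 fun x => hg x z⟩,
    fun v => lp.ext (funext fun x => hgA x v),
    fun z => lp.norm_le_of_forall_le (by positivity) fun x => hg x z⟩

end HahnBanach

section ProjectionConstant

variable {V Z : Type*} [AddCommGroup V] [Module ℂ V] [NormedAddCommGroup Z] [NormedSpace ℂ Z]

/-- The relative projection constant of `I(V)` in `Z`: the infimum of the norms of the bounded
projections of `Z` onto the range of `I`, as it occurs inside `projConstWith`. -/
noncomputable def relProjConst (I : V →ₗ[ℂ] Z) : ℝ :=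
  sInf {c : ℝ | ∃ P : Z →L[ℂ] Z, (∀ v, P (I v) = I v) ∧ (∀ z, ∃ v, P z = I v) ∧ c = ‖P‖}

lemma relProjConst_nonneg (I : V →ₗ[ℂ] Z) : 0 ≤ relProjConst I := by
  apply Real.sInf_nonneg
  rintro _ ⟨P, -, -, rfl⟩
  exact norm_nonneg P

lemma relProjConst_le_norm (I : V →ₗ[ℂ] Z) (P : Z →L[ℂ] Z) (hPI : ∀ v, P (I v) = I v)
    (hP : ∀ z, ∃ v, P z = I v) : relProjConst I ≤ ‖P‖ :=
  csInf_le ⟨0, by rintro _ ⟨Q, -, -, rfl⟩; exact norm_nonneg Q⟩ ⟨P, hPI, hP, rfl⟩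

lemma projConstWith_nonneg (νV : V → ℝ) : 0 ≤ projConstWith V νV := by
  apply Real.sSup_nonneg
  rintro _ ⟨Z, _, _, I, -, rfl⟩
  exact relProjConst_nonneg I

lemma ker_eq_bot_of_isometric {q : Seminorm ℂ V} (hq : ∀ v, q v = 0 → v = 0)
    {I : V →ₗ[ℂ] Z} (hI : ∀ v, ‖I v‖ = q v) : LinearMap.ker I = ⊥ :=
  LinearMap.ker_eq_bot'.2 fun v hv => hq v (by rw [← hI, hv, norm_zero])

variable [FiniteDimensional ℂ V]

lemma exists_uniform_projection_bound {q : Seminorm ℂ V} (hq : ∀ v, q v = 0 → v = 0) :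
    ∃ K : ℝ, ∀ (Z : Type*) [NormedAddCommGroup Z] [NormedSpace ℂ Z] (I : V →ₗ[ℂ] Z),
      (∀ v, ‖I v‖ = q v) →
      ∃ P : Z →L[ℂ] Z, (∀ v, P (I v) = I v) ∧ (∀ z, ∃ v, P z = I v) ∧ ‖P‖ ≤ K := by
  let b := Module.finBasis ℂ V
  choose C hC₀ hC using fun i => exists_norm_le_mul_seminorm q hq (b.coord i)
  refine ⟨∑ i, C i * q (b i), fun Z _ _ I hI => ?_⟩
  choose g hgI hg using fun i =>
    exists_extension_along I (b.coord i) (hC₀ i) fun v => (hC i v).trans_eq (by rw [hI])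
  let G (i) : Z →L[ℂ] ℂ := (g i).mkContinuous (C i) (hg i)
  let P : Z →L[ℂ] Z := ∑ i, (G i).smulRight (I (b i))
  have hP (z : Z) : P z = I (∑ i, g i z • b i) := by
    simp only [P, G, _root_.sum_apply, ContinuousLinearMap.smulRight_apply,
      LinearMap.mkContinuous_apply, map_sum, map_smul]
  refine ⟨P, fun v => ?_, fun z => ⟨_, hP z⟩, ?_⟩
  · simp only [hP, hgI, Module.Basis.coord_apply, b.sum_repr]
  · calc ‖P‖ ≤ ∑ i, ‖(G i).smulRight (I (b i))‖ := norm_sum_le _ _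
      _ = ∑ i, ‖G i‖ * q (b i) := by simp only [ContinuousLinearMap.norm_smulRight_apply, hI]
      _ ≤ ∑ i, C i * q (b i) := by
        gcongr with i
        exact LinearMap.mkContinuous_norm_le _ (hC₀ i) _

lemma relProjConst_le_projConstWith {Z : Type} [NormedAddCommGroup Z] [NormedSpace ℂ Z]
    {q : Seminorm ℂ V} (hq : ∀ v, q v = 0 → v = 0) {I : V →ₗ[ℂ] Z} (hI : ∀ v, ‖I v‖ = q v) :
    relProjConst I ≤ projConstWith V q := by
  obtain ⟨K, hK⟩ := exists_uniform_projection_bound hq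
  rw [projConstWith]
  refine le_csSup ⟨K, ?_⟩ ⟨Z, _, _, I, hI, rfl⟩
  rintro _ ⟨Y, _, _, J, hJ, rfl⟩
  obtain ⟨P, hPJ, hP, hPK⟩ := hK Y J hJ
  exact (relProjConst_le_norm J P hPJ hP).trans hPK

lemma exists_leftInverse_of_relProjConst_lt {q : Seminorm ℂ V} (hq : ∀ v, q v = 0 → v = 0)
    {I : V →ₗ[ℂ] Z} (hI : ∀ v, ‖I v‖ = q v) {c : ℝ} (hc : relProjConst I < c) :
    ∃ L : Z →ₗ[ℂ] V, (∀ v, L (I v) = v) ∧ ∀ z, q (L z) ≤ c * ‖z‖ := by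
  obtain ⟨K, hK⟩ := exists_uniform_projection_bound hq
  obtain ⟨Q, hQI, hQ, -⟩ := hK Z I hI
  obtain ⟨_, ⟨P, hPI, hP, rfl⟩, hPc⟩ :=
    exists_lt_of_csInf_lt (by exact ⟨‖Q‖, Q, hQI, hQ, rfl⟩) hc
  obtain ⟨L, hL⟩ := I.exists_leftInverse_of_injective (ker_eq_bot_of_isometric hq hI)
  have hLI (v : V) : L (I v) = v := LinearMap.congr_fun hL v
  refine ⟨L ∘ₗ P.toLinearMap, fun v => ?_, fun z => ?_⟩
  · exact (congrArg L (hPI v)).trans (hLI v)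
  · obtain ⟨v, hv⟩ := hP z
    calc q (L (P z)) = ‖P z‖ := by rw [hv, hLI, hI]
      _ ≤ c * ‖z‖ := (P.le_opNorm z).trans (by gcongr)

end ProjectionConstant

section Factorization

variable {𝕜 X : Type*} [RCLike 𝕜]

lemma exists_finset_norm_le_mul (U : Submodule 𝕜 ℓ^∞(X, 𝕜)) [FiniteDimensional 𝕜 U] {θ : ℝ}
    (hθ : 1 < θ) : ∃ s : Finset X, ∀ f ∈ U, ‖f‖ ≤ θ * ‖fun x : s => f x‖ := by
  have : ProperSpace U := FiniteDimensional.proper 𝕜 U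
  let O (x : X) : Set U := {f | 1 < θ * ‖(f : ℓ^∞(X, 𝕜)) x‖}
  have isOpen_O (x : X) : IsOpen (O x) := by
    have : Continuous fun f : U => (f : ℓ^∞(X, 𝕜)) x :=
      (lp.evalCLM 𝕜 (fun _ : X => 𝕜) ∞ x).continuous.comp continuous_subtype_val
    exact isOpen_lt continuous_const (by fun_prop)
  have sphere_subset : Metric.sphere (0 : U) 1 ⊆ ⋃ x, O x := by
    intro f hf
    by_contra hfO
    simp only [O, Set.mem_iUnion, Set.mem_ofPred_eq, not_exists, not_lt] at hfO
    have : ‖(f : ℓ^∞(X, 𝕜))‖ ≤ θ⁻¹ := lp.norm_le_of_forall_le (by positivity) fun x => by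
      rw [← one_div, le_div_iff₀' (by positivity)]
      exact hfO x
    have norm_f : ‖(f : ℓ^∞(X, 𝕜))‖ = 1 := mem_sphere_zero_iff_norm.1 hf
    exact absurd (norm_f ▸ this) (inv_lt_one_of_one_lt₀ hθ).not_ge
  obtain ⟨s, hs⟩ := (isCompact_sphere (0 : U) 1).elim_finite_subcover O isOpen_O sphere_subset
  refine ⟨s, fun f hf => ?_⟩
  obtain rfl | hf₀ := eq_or_ne f 0
  · rw [norm_zero]; positivity
  let u : U := ((‖f‖ : 𝕜)⁻¹) • (⟨f, hf⟩ : U)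
  have hu : u ∈ Metric.sphere (0 : U) 1 := by
    rw [mem_sphere_zero_iff_norm]
    exact norm_smul_inv_norm (𝕜 := 𝕜) (x := (⟨f, hf⟩ : U)) (by simpa using hf₀)
  obtain ⟨x, hxs, hx⟩ := Set.mem_iUnion₂.1 (hs hu)
  have hfx : 1 < θ * (‖f‖⁻¹ * ‖f x‖) := by
    simpa [O, u, norm_smul] using hx
  calc ‖f‖ ≤ θ * ‖f x‖ := by
        rw [mul_left_comm, ← div_eq_inv_mul, one_lt_div (norm_pos_iff.2 hf₀)] at hfx
        exact hfx.le
    _ ≤ θ * ‖fun x : s => f x‖ := by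
        gcongr
        exact norm_le_pi_norm (fun x : s => f x) ⟨x, hxs⟩

lemma exists_factorization_of_projConstWith_lt {V X : Type} [AddCommGroup V] [Module ℂ V]
    [FiniteDimensional ℂ V] {q : Seminorm ℂ V} (hq : ∀ v, q v = 0 → v = 0)
    {I : V →ₗ[ℂ] ℓ^∞(X, ℂ)} (hI : ∀ v, ‖I v‖ = q v) {c : ℝ} (hc : projConstWith V q < c) :
    ∃ (s : Finset X) (W : (s → ℂ) →ₗ[ℂ] V),
      (∀ v, W (fun x => I v x) = v) ∧ ∀ z, q (W z) ≤ c * ‖z‖ := by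
  obtain ⟨d, hd, hdc⟩ := exists_between hc
  have hd₀ : 0 < d := (projConstWith_nonneg q).trans_lt hd
  obtain ⟨L, hLI, hL⟩ := exists_leftInverse_of_relProjConst_lt hq hI
    ((relProjConst_le_projConstWith hq hI).trans_lt hd)
  obtain ⟨s, hs⟩ := exists_finset_norm_le_mul I.range ((one_lt_div hd₀).2 hdc)
  let A : V →ₗ[ℂ] s → ℂ := LinearMap.pi fun x => lp.evalₗ (fun _ : X => ℂ) ∞ x ∘ₗ I
  obtain ⟨G, hGA, hG⟩ := exists_lp_infty_extension_along A I (C := c / d)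
    (div_pos (hd₀.trans hdc) hd₀).le fun v => hs (I v) ⟨v, rfl⟩
  refine ⟨s, L ∘ₗ G, fun v => (congrArg L (hGA v)).trans (hLI v), fun z => ?_⟩
  calc q (L (G z)) ≤ d * ‖G z‖ := hL _
    _ ≤ d * (c / d * ‖z‖) := by gcongr; exact hG z
    _ = c * ‖z‖ := by rw [← mul_assoc, mul_div_cancel₀ _ hd₀.ne']

end Factorization

section GordonLewis

lemma sum_norm_le_of_forall_norm_sum_mul_le {𝕜 ι : Type*} [RCLike 𝕜] [Fintype ι] {x : ι → 𝕜}
    {C : ℝ} (hx : ∀ ε : ι → 𝕜, (∀ i, ‖ε i‖ ≤ 1) → ‖∑ i, ε i * x i‖ ≤ C) : ∑ i, ‖x i‖ ≤ C := by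
  choose ε hε hεx using fun i => RCLike.exists_norm_eq_mul_self (x i)
  have h := hx ε fun i => (hε i).le
  simp only [← hεx] at h
  rw [← RCLike.ofReal_sum, RCLike.norm_ofReal] at h
  exact (le_abs_self _).trans h

variable {V W : Type*} [AddCommGroup V] [Module ℂ V] [NormedAddCommGroup W] [NormedSpace ℂ W]

lemma pi1With_norm_nonneg (νV : V → ℝ) (T : V →ₗ[ℂ] W) :
    0 ≤ pi1With νV (fun w => ‖w‖) T := by
  apply Real.sSup_nonneg
  rintro _ ⟨N, v, -, rfl⟩
  positivity

lemma exists_bound_sum_norm_map [FiniteDimensional ℂ V] (q : Seminorm ℂ V)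
    (hq : ∀ v, q v = 0 → v = 0) (T : V →ₗ[ℂ] W) :
    ∃ M : ℝ, ∀ (N : ℕ) (v : Fin N → V),
      (∀ ε : Fin N → ℂ, (∀ i, ‖ε i‖ ≤ 1) → q (∑ i, ε i • v i) ≤ 1) → ∑ i, ‖T (v i)‖ ≤ M := by
  let b := Module.finBasis ℂ V
  choose C hC₀ hC using fun j => exists_norm_le_mul_seminorm q hq (b.coord j)
  refine ⟨∑ j, C j * ‖T (b j)‖, fun N v hv => ?_⟩
  have coord_le (j) : ∑ i, ‖b.coord j (v i)‖ ≤ C j :=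
    sum_norm_le_of_forall_norm_sum_mul_le fun ε hε => by
      simpa only [map_sum, map_smul, smul_eq_mul] using
        (hC j (∑ i, ε i • v i)).trans (mul_le_of_le_one_right (hC₀ j) (hv ε hε))
  have norm_T_le (w : V) : ‖T w‖ ≤ ∑ j, ‖b.coord j w‖ * ‖T (b j)‖ := by
    conv_lhs => rw [← b.sum_repr w, map_sum]
    exact norm_sum_le_of_le _ fun j _ => by rw [map_smul, norm_smul, b.coord_apply]
  calc ∑ i, ‖T (v i)‖ ≤ ∑ i, ∑ j, ‖b.coord j (v i)‖ * ‖T (b j)‖ :=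
        sum_le_sum fun i _ => norm_T_le (v i)
    _ = ∑ j, (∑ i, ‖b.coord j (v i)‖) * ‖T (b j)‖ := by
        rw [sum_comm]; simp only [sum_mul]
    _ ≤ ∑ j, C j * ‖T (b j)‖ := by
        gcongr with j
        exact coord_le j

lemma sum_norm_map_le_mul_pi1With [FiniteDimensional ℂ V] {q : Seminorm ℂ V}
    (hq : ∀ v, q v = 0 → v = 0) (T : V →ₗ[ℂ] W) {ι : Type*} [Fintype ι] (v : ι → V) {B : ℝ}
    (hB : 0 < B) (hv : ∀ ε : ι → ℂ, (∀ i, ‖ε i‖ ≤ 1) → q (∑ i, ε i • v i) ≤ B) :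
    ∑ i, ‖T (v i)‖ ≤ B * pi1With q (fun w => ‖w‖) T := by
  let e := Fintype.equivFin ι
  have norm_B : ‖(B : ℂ)⁻¹‖ = B⁻¹ := by
    rw [norm_inv, Complex.norm_real, Real.norm_of_nonneg hB.le]
  let u (j) : V := (B : ℂ)⁻¹ • v (e.symm j)
  have hu (ε : Fin (Fintype.card ι) → ℂ) (hε : ∀ j, ‖ε j‖ ≤ 1) : q (∑ j, ε j • u j) ≤ 1 := by
    have : ∑ j, ε j • u j = (B : ℂ)⁻¹ • ∑ i, ε (e i) • v i := by
      rw [smul_sum, ← e.sum_comp]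
      exact sum_congr rfl fun i _ => by simp only [u, e.symm_apply_apply, smul_comm (ε (e i))]
    rw [this, map_smul_eq_mul, norm_B, inv_mul_le_one₀ hB]
    exact hv _ fun i => hε (e i)
  obtain ⟨M, hM⟩ := exists_bound_sum_norm_map q hq T
  have : ∑ j, ‖T (u j)‖ ≤ pi1With q (fun w => ‖w‖) T :=
    le_csSup ⟨M, by rintro _ ⟨N, w, hw, rfl⟩; exact hM N w hw⟩ ⟨_, u, hu, rfl⟩
  simp only [u, map_smul, norm_smul, norm_B] at this
  rwa [← mul_sum, e.symm.sum_comp fun i => ‖T (v i)‖, inv_mul_le_iff₀ hB] at this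

/-- The identification of `L¹` of the counting measure on a finite type with `ι → ℂ`. -/
noncomputable def lpCountEquiv (ι : Type*) [Fintype ι] [MeasurableSpace ι]
    [MeasurableSingletonClass ι] : Lp ℂ 1 (Measure.count : Measure ι) ≃ₗ[ℂ] (ι → ℂ) where
  toFun f := f
  invFun g := (MemLp.of_discrete (f := g)).toLp g
  map_add' f g := funext (Measure.ae_count_iff.1 (Lp.coeFn_add f g))
  map_smul' c f := funext (Measure.ae_count_iff.1 (Lp.coeFn_smul c f))
  left_inv f := Lp.toLp_coeFn f _
  right_inv _ := funext (Measure.ae_count_iff.1 (MemLp.coeFn_toLp _))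

lemma norm_eq_sum_norm_lpCountEquiv {ι : Type*} [Fintype ι] [MeasurableSpace ι]
    [MeasurableSingletonClass ι] (f : Lp ℂ 1 (Measure.count : Measure ι)) :
    ‖f‖ = ∑ i, ‖lpCountEquiv ι f i‖ := by
  rw [L1.norm_eq_integral_norm]
  exact integral_count _

lemma exists_factorization_through_L1 {ι : Type} [Fintype ι] (φ : ι → V →ₗ[ℂ] ℂ) (w : ι → W) :
    ∃ (Ω : Type) (_ : MeasurableSpace Ω) (μ : Measure Ω) (R : V →ₗ[ℂ] Lp ℂ 1 μ)
      (S : Lp ℂ 1 μ →L[ℂ] W), (∀ v, S (R v) = ∑ i, φ i v • w i) ∧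
      (∀ v, ‖R v‖ = ∑ i, ‖φ i v • w i‖) ∧ ‖S‖ ≤ 1 := by
  let _ : MeasurableSpace ι := ⊤
  let J := lpCountEquiv ι
  let R := J.symm.toLinearMap ∘ₗ LinearMap.pi fun i => (‖w i‖ : ℂ) • φ i
  have hR (v i) : J (R v) i = ‖w i‖ * φ i v := congrFun (J.apply_symm_apply _) i
  let S₀ : Lp ℂ 1 (Measure.count : Measure ι) →ₗ[ℂ] W :=
    ∑ i, (LinearMap.proj i ∘ₗ J.toLinearMap).smulRight ((‖w i‖ : ℂ)⁻¹ • w i)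
  have hS₀ (f) : S₀ f = ∑ i, J f i • (‖w i‖ : ℂ)⁻¹ • w i := by
    simp [S₀]
  have norm_S₀ (f) : ‖S₀ f‖ ≤ 1 * ‖f‖ := by
    rw [one_mul, norm_eq_sum_norm_lpCountEquiv, hS₀]
    refine norm_sum_le_of_le _ fun i _ => ?_
    rw [norm_smul, norm_smul, norm_inv, Complex.norm_real, norm_norm]
    exact mul_le_of_le_one_right (norm_nonneg _) inv_mul_le_one
  refine ⟨ι, _, _, R, S₀.mkContinuous 1 norm_S₀, fun v => ?_, fun v => ?_,
    LinearMap.mkContinuous_norm_le _ zero_le_one _⟩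
  · rw [LinearMap.mkContinuous_apply, hS₀]
    refine sum_congr rfl fun i _ => ?_
    obtain hw | hw := eq_or_ne (w i) 0
    · simp only [hw, smul_zero]
    · have : (‖w i‖ : ℂ) ≠ 0 := by exact_mod_cast norm_ne_zero_iff.2 hw
      rw [hR, smul_smul, mul_right_comm, mul_inv_cancel₀ this, one_mul]
  · rw [norm_eq_sum_norm_lpCountEquiv]
    refine sum_congr rfl fun i _ => ?_
    rw [hR, norm_mul, norm_smul, Complex.norm_real, norm_norm, mul_comm]

theorem glWith_le_of_unconditional_frame [FiniteDimensional ℂ V] {q : Seminorm ℂ V}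
    (hq : ∀ v, q v = 0 → v = 0) {ι : Type} [Fintype ι] (φ : ι → V →ₗ[ℂ] ℂ) (u : ι → V) {K : ℝ}
    (hK : 0 < K) (reconstruction : ∀ v, ∑ i, φ i v • u i = v)
    (unconditional : ∀ v, q v ≤ 1 → ∀ ε : ι → ℂ, (∀ i, ‖ε i‖ ≤ 1) →
      q (∑ i, ε i • φ i v • u i) ≤ K) :
    glWith V q ≤ K := by
  refine csInf_le ⟨0, fun c hc => hc.1⟩ ⟨hK.le, fun k T => ?_⟩
  obtain ⟨Ω, _, μ, R, S, hSR, hR, hS⟩ := exists_factorization_through_L1 φ fun i => T (u i)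
  refine ⟨Ω, _, μ, R, S, fun v => ?_, ?_⟩
  · simp only [hSR, ← map_smul, ← map_sum, reconstruction]
  have norm_R : opNormWith q (fun f => ‖f‖) R ≤ K * pi1With q (fun w => ‖w‖) T := by
    refine Real.sSup_le ?_ (mul_nonneg hK.le (pi1With_norm_nonneg _ _))
    rintro _ ⟨v, hv, rfl⟩
    simp only [hR, ← map_smul]
    exact sum_norm_map_le_mul_pi1With hq T _ hK (unconditional v hv)
  calc opNormWith q (fun f => ‖f‖) R * ‖S‖ ≤ K * pi1With q (fun w => ‖w‖) T * 1 :=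
        mul_le_mul norm_R hS (norm_nonneg S) (mul_nonneg hK.le (pi1With_norm_nonneg _ _))
    _ = K * pi1With q (fun w => ‖w‖) T := mul_one _

end GordonLewis

open MvPolynomial in
lemma hasDerivAt_eval_add_smul {σ 𝕜 : Type*} [Fintype σ] [NontriviallyNormedField 𝕜]
    (P : MvPolynomial σ 𝕜) (t x : σ → 𝕜) (c : 𝕜) :
    HasDerivAt (fun ζ : 𝕜 => eval (t + ζ • x) P)
      (∑ k, x k * eval (t + c • x) (pderiv k P)) c := by
  classical
  induction P using MvPolynomial.induction_on with
  | C r => simpa using hasDerivAt_const c r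
  | add P Q hP hQ =>
    simp only [map_add, mul_add, sum_add_distrib]
    exact hP.add hQ
  | mul_X P i hP =>
    have hX : HasDerivAt (fun ζ : 𝕜 => (t + ζ • x) i) (x i) c := by
      simpa using ((hasDerivAt_id c).mul_const (x i)).const_add (t i)
    simp only [map_mul, eval_X]
    refine (hP.mul hX).congr_deriv ?_
    simp only [Derivation.leibniz, pderiv_X, smul_eq_mul, map_add, map_mul, eval_X, mul_add,
      sum_add_distrib, sum_mul, Pi.single_apply, apply_ite, map_zero, mul_one, mul_zero,
      sum_ite_eq, mem_univ, if_true]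
    rw [add_comm, mul_comm (x i)]
    congr 1
    exact sum_congr rfl fun k _ => by ring

namespace Coef

open MvPolynomial

variable {n m : ℕ}

/-- The polynomial in `n` variables with the given coefficients. -/
noncomputable def toMvPolynomial : Coef n m →ₗ[ℂ] MvPolynomial (Fin n) ℂ :=
  ∑ α, monomial (Finsupp.equivFunOnFinite.symm α.1) ∘ₗ LinearMap.proj α

/-- The coefficients in degree `m` of a polynomial in `n` variables. -/
noncomputable def ofMvPolynomial : MvPolynomial (Fin n) ℂ →ₗ[ℂ] Coef n m :=
  LinearMap.pi fun α => lcoeff ℂ (Finsupp.equivFunOnFinite.symm α.1)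

lemma toMvPolynomial_apply (a : Coef n m) :
    toMvPolynomial a = ∑ α, monomial (Finsupp.equivFunOnFinite.symm α.1) (a α) := by
  simp only [toMvPolynomial, LinearMap.sum_apply, LinearMap.comp_apply, LinearMap.proj_apply]

lemma coeff_toMvPolynomial (a : Coef n m) (d : Fin n →₀ ℕ) :
    coeff d (toMvPolynomial a) =
      if h : ⇑d ∈ Finset.Nat.antidiagonalTuple n m then a ⟨d, h⟩ else 0 := by
  simp only [toMvPolynomial_apply, coeff_sum, coeff_monomial, Equiv.symm_apply_eq]
  split_ifs with h
  · let β : { α : Fin n → ℕ // α ∈ Finset.Nat.antidiagonalTuple n m } := ⟨d, h⟩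
    exact (Fintype.sum_eq_single β fun α hα => if_neg fun hd => hα (Subtype.ext hd)).trans
      (if_pos rfl)
  · exact sum_eq_zero fun α _ => if_neg fun (hd : α.1 = d) => h (hd ▸ α.2)

lemma isHomogeneous_toMvPolynomial (a : Coef n m) : (toMvPolynomial a).IsHomogeneous m := by
  rw [toMvPolynomial_apply]
  refine IsHomogeneous.sum _ _ _ fun α _ => isHomogeneous_monomial _ ?_
  rw [Finsupp.degree_eq_sum]
  exact Finset.Nat.mem_antidiagonalTuple.1 α.2

lemma ofMvPolynomial_toMvPolynomial (a : Coef n m) : ofMvPolynomial (toMvPolynomial a) = a := by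
  ext α
  exact (coeff_toMvPolynomial a _).trans (dif_pos α.2)

lemma toMvPolynomial_ofMvPolynomial {P : MvPolynomial (Fin n) ℂ} (hP : P.IsHomogeneous m) :
    toMvPolynomial (ofMvPolynomial P : Coef n m) = P := by
  ext d
  rw [coeff_toMvPolynomial]
  split_ifs with h
  · simp [ofMvPolynomial]
  · refine (hP.coeff_eq_zero fun hd => h ?_).symm
    rwa [Finset.Nat.mem_antidiagonalTuple, ← Finsupp.degree_eq_sum]

lemma eval_toMvPolynomial (a : Coef n m) (z : Fin n → ℂ) :
    eval z (toMvPolynomial a) = evalC a z := by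
  simp [toMvPolynomial_apply, evalC, eval_monomial, Finsupp.prod_fintype]

/-- Evaluation at `z` as a linear functional of the coefficients. -/
noncomputable def evalₗ (z : Fin n → ℂ) : Coef n m →ₗ[ℂ] ℂ :=
  (aeval z).toLinearMap ∘ₗ toMvPolynomial

lemma evalₗ_apply (z : Fin n → ℂ) (a : Coef n m) : evalₗ z a = evalC a z := by
  rw [← eval_toMvPolynomial, ← coe_aeval_eq_eval]
  rfl

lemma evalC_smul (a : Coef n m) (c : ℂ) (z : Fin n → ℂ) :
    evalC a (c • z) = c ^ m * evalC a z := by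
  simp only [evalC, Pi.smul_apply, smul_eq_mul, mul_pow, prod_mul_distrib, mul_sum]
  refine sum_congr rfl fun α _ => ?_
  rw [prod_pow_eq_pow_sum, Finset.Nat.mem_antidiagonalTuple.1 α.2]
  ring

lemma eq_zero_of_forall_evalC_eq_zero {a : Coef n m} (ha : ∀ z, evalC a z = 0) : a = 0 := by
  have : toMvPolynomial a = 0 := MvPolynomial.funext fun z => by
    rw [eval_toMvPolynomial, ha, map_zero]
  rw [← ofMvPolynomial_toMvPolynomial a, this, map_zero]

/-- Multiplication by the coordinate function `z k`. -/
noncomputable def mulX (k : Fin n) : Coef n m →ₗ[ℂ] Coef n (m + 1) :=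
  ofMvPolynomial ∘ₗ LinearMap.mulLeft ℂ (X k) ∘ₗ toMvPolynomial

/-- The partial derivative `∂ / ∂z k`. -/
noncomputable def pderiv (k : Fin n) : Coef n (m + 1) →ₗ[ℂ] Coef n m :=
  ofMvPolynomial ∘ₗ (MvPolynomial.pderiv k).toLinearMap ∘ₗ toMvPolynomial

lemma toMvPolynomial_mulX (k : Fin n) (a : Coef n m) :
    toMvPolynomial (mulX k a) = X k * toMvPolynomial a :=
  toMvPolynomial_ofMvPolynomial <|
    add_comm 1 m ▸ (isHomogeneous_X ℂ k).mul (isHomogeneous_toMvPolynomial a)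

lemma toMvPolynomial_pderiv (k : Fin n) (a : Coef n (m + 1)) :
    toMvPolynomial (pderiv k a) = MvPolynomial.pderiv k (toMvPolynomial a) :=
  toMvPolynomial_ofMvPolynomial (isHomogeneous_toMvPolynomial a).pderiv

lemma evalC_mulX (k : Fin n) (a : Coef n m) (z : Fin n → ℂ) :
    evalC (mulX k a) z = z k * evalC a z := by
  rw [← eval_toMvPolynomial, toMvPolynomial_mulX, map_mul, eval_X, eval_toMvPolynomial]

lemma sum_mulX_pderiv (a : Coef n (m + 1)) : ∑ k, mulX k (pderiv k a) = (m + 1) • a := by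
  have euler : toMvPolynomial (∑ k, mulX k (pderiv k a)) = toMvPolynomial ((m + 1) • a) := by
    simp only [map_sum, toMvPolynomial_mulX, toMvPolynomial_pderiv, map_nsmul,
      (isHomogeneous_toMvPolynomial a).sum_X_mul_pderiv]
  exact Function.LeftInverse.injective ofMvPolynomial_toMvPolynomial euler

lemma hasDerivAt_evalC_add_smul (a : Coef n (m + 1)) (t x : Fin n → ℂ) (c : ℂ) :
    HasDerivAt (fun ζ : ℂ => evalC a (t + ζ • x))
      (∑ k, x k * evalC (pderiv k a) (t + c • x)) c := by
  simpa only [← eval_toMvPolynomial, toMvPolynomial_pderiv] using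
    hasDerivAt_eval_add_smul (toMvPolynomial a) t x c

end Coef

section PolynomialNorm

variable {n m : ℕ}

lemma polyNorm_le {ν : (Fin n → ℂ) → ℝ} {a : Coef n m} {C : ℝ} (hC : 0 ≤ C)
    (ha : ∀ z, ν z ≤ 1 → ‖evalC a z‖ ≤ C) : polyNorm n m ν a ≤ C := by
  refine Real.sSup_le ?_ hC
  rintro _ ⟨z, hz, rfl⟩
  exact ha z hz

variable {p : Seminorm ℂ (Fin n → ℂ)} (hp : ∀ z, p z = 0 → z = 0)

include hp

lemma bddAbove_norm_evalC (a : Coef n m) :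
    BddAbove (Set.range fun z : { z // p z ≤ 1 } => ‖evalC a z‖) := by
  obtain ⟨M, hM₀, hM⟩ := exists_norm_le_mul_seminorm p hp LinearMap.id
  have continuous_evalC : Continuous fun z => ‖evalC a z‖ := by
    simp only [← Coef.eval_toMvPolynomial]
    exact (MvPolynomial.continuous_eval _).norm
  refine ((isCompact_closedBall 0 M).bddAbove_image continuous_evalC.continuousOn).mono ?_
  rintro _ ⟨⟨z, hz⟩, rfl⟩
  exact ⟨z, mem_closedBall_zero_iff.2 ((hM z).trans (mul_le_of_le_one_right hM₀ hz)), rfl⟩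

/-- The isometric embedding of `𝒫(^m X)` into `ℓ^∞(B_X)` by restriction to the unit ball. -/
noncomputable def ballEval : Coef n m →ₗ[ℂ] ℓ^∞({ z // p z ≤ 1 }, ℂ) :=
  lpInftyPi (fun z => Coef.evalₗ z.1) fun a => by
    simpa only [Coef.evalₗ_apply] using bddAbove_norm_evalC hp a

lemma ballEval_apply (a : Coef n m) (z : { z // p z ≤ 1 }) : ballEval hp a z = evalC a z :=
  Coef.evalₗ_apply _ _

lemma norm_ballEval (a : Coef n m) : ‖ballEval hp a‖ = polyNorm n m p a := by
  rw [lp.norm_eq_ciSup, polyNorm, iSup]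
  congr 1
  ext x
  simp [ballEval_apply, eq_comm]

lemma norm_evalC_le_polyNorm (a : Coef n m) {z : Fin n → ℂ} (hz : p z ≤ 1) :
    ‖evalC a z‖ ≤ polyNorm n m p a := by
  rw [← norm_ballEval hp, ← ballEval_apply hp a ⟨z, hz⟩]
  exact lp.norm_apply_le_norm ENNReal.top_ne_zero (ballEval hp a) ⟨z, hz⟩

lemma norm_evalC_le_pow_mul_polyNorm (a : Coef n m) {r : ℝ} (hr : 0 < r) {z : Fin n → ℂ}
    (hz : p z ≤ r) : ‖evalC a z‖ ≤ r ^ m * polyNorm n m p a := by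
  have norm_r : ‖(r : ℂ)‖ = r := by rw [Complex.norm_real, Real.norm_of_nonneg hr.le]
  have hr' : (r : ℂ) ≠ 0 := Complex.ofReal_ne_zero.2 hr.ne'
  have hz' : p ((r : ℂ)⁻¹ • z) ≤ 1 := by
    rwa [map_smul_eq_mul, norm_inv, norm_r, inv_mul_le_one₀ hr]
  calc ‖evalC a z‖ = ‖evalC a ((r : ℂ) • (r : ℂ)⁻¹ • z)‖ := by rw [smul_inv_smul₀ hr']
    _ = r ^ m * ‖evalC a ((r : ℂ)⁻¹ • z)‖ := by rw [Coef.evalC_smul, norm_mul, norm_pow, norm_r]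
    _ ≤ r ^ m * polyNorm n m p a := by
      gcongr
      exact norm_evalC_le_polyNorm hp a hz'

/-- `polyNorm` as a seminorm. -/
noncomputable def polySeminorm (m : ℕ) : Seminorm ℂ (Coef n m) :=
  (normSeminorm ℂ _).comp (ballEval hp)

lemma coe_polySeminorm : ⇑(polySeminorm hp m) = polyNorm n m p :=
  funext (norm_ballEval hp)

lemma eq_zero_of_polySeminorm_eq_zero (a : Coef n m) (ha : polySeminorm hp m a = 0) : a = 0 := by
  refine Coef.eq_zero_of_forall_evalC_eq_zero fun z => norm_le_zero_iff.1 ?_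
  rw [coe_polySeminorm] at ha
  have := norm_evalC_le_pow_mul_polyNorm hp a (add_pos_of_nonneg_of_pos (apply_nonneg p z) one_pos)
    (le_add_of_nonneg_right zero_le_one)
  rwa [ha, mul_zero] at this

/- Cauchy's estimate for `ζ ↦ P (t + ζ x)` on the circle of radius `1 / (m + 1)`, on which
`|P| ≤ (1 + 1 / (m + 1)) ^ (m + 1) ‖P‖ ≤ e ‖P‖`. -/
theorem norm_sum_mul_evalC_pderiv_le (a : Coef n (m + 1)) {t x : Fin n → ℂ} (ht : p t ≤ 1)
    (hx : p x ≤ 1) :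
    ‖∑ k, x k * evalC (Coef.pderiv k a) t‖ ≤ (m + 1) * (Real.exp 1 * polyNorm n (m + 1) p a) := by
  have norm_on_circle (ζ : ℂ) (hζ : ζ ∈ Metric.sphere (0 : ℂ) ((m + 1 : ℝ)⁻¹)) :
      ‖evalC a (t + ζ • x)‖ ≤ Real.exp 1 * polyNorm n (m + 1) p a := by
    have hζx : p (t + ζ • x) ≤ 1 + (m + 1 : ℝ)⁻¹ := by
      refine (map_add_le_add p _ _).trans (add_le_add ht ?_)
      rw [map_smul_eq_mul, mem_sphere_zero_iff_norm.1 hζ]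
      exact mul_le_of_le_one_right (by positivity) hx
    refine (norm_evalC_le_pow_mul_polyNorm hp a (by positivity) hζx).trans ?_
    gcongr
    · rw [← norm_ballEval hp]; exact norm_nonneg _
    · exact_mod_cast Real.one_add_inv_pow_le_exp (n := m + 1)
  have cauchy := Complex.norm_deriv_le_of_forall_mem_sphere_norm_le (c := 0)
    (by positivity : (0 : ℝ) < (m + 1 : ℝ)⁻¹)
    (Differentiable.diffContOnCl fun ζ => (Coef.hasDerivAt_evalC_add_smul a t x ζ).differentiableAt)
    norm_on_circle
  rw [(Coef.hasDerivAt_evalC_add_smul a t x 0).deriv, zero_smul, add_zero] at cauchy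
  rwa [div_inv_eq_mul, mul_comm] at cauchy

lemma polyNorm_sum_mulX_le {J : Type*} [Fintype J] (W : (J → ℂ) →ₗ[ℂ] Coef n m) {B C : ℝ}
    (hB : 0 ≤ B) (hC : 0 ≤ C) (hW : ∀ y, polyNorm n m p (W y) ≤ C * ‖y‖) (b : Fin n → J → ℂ)
    (hb : ∀ z, p z ≤ 1 → ∀ j, ‖∑ k, z k * b k j‖ ≤ B) :
    polyNorm n (m + 1) p (∑ k, Coef.mulX k (W (b k))) ≤ C * B := by
  refine polyNorm_le (mul_nonneg hC hB) fun z hz => ?_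
  have eval_eq : evalC (∑ k, Coef.mulX k (W (b k))) z = evalC (W (∑ k, z k • b k)) z := by
    simp only [← Coef.evalₗ_apply, map_sum, map_smul]
    simp only [Coef.evalₗ_apply, Coef.evalC_mulX, smul_eq_mul]
  have norm_le : ‖∑ k, z k • b k‖ ≤ B := (pi_norm_le_iff_of_nonneg hB).2 fun j => by
    simpa only [Finset.sum_apply, Pi.smul_apply, smul_eq_mul] using hb z hz j
  calc ‖evalC (∑ k, Coef.mulX k (W (b k))) z‖ = ‖evalC (W (∑ k, z k • b k)) z‖ := by rw [eval_eq]
    _ ≤ polyNorm n m p (W (∑ k, z k • b k)) := norm_evalC_le_polyNorm hp _ hz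
    _ ≤ C * ‖∑ k, z k • b k‖ := hW _
    _ ≤ C * B := by gcongr

end PolynomialNorm

lemma sum_smul_apply_single_prod {R M K J : Type*} [CommSemiring R] [AddCommMonoid M] [Module R M]
    [Fintype K] [Fintype J] [DecidableEq J] (f : K → (J → R) →ₗ[R] M) (y : K × J → R) :
    ∑ i, y i • f i.1 (Pi.single i.2 1) = ∑ k, f k fun j => y (k, j) := by
  rw [Fintype.sum_prod_type]
  refine sum_congr rfl fun k _ => ?_
  rw [← Finset.univ_sum_single fun j => y (k, j), map_sum]
  refine sum_congr rfl fun j _ => ?_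
  rw [← map_smul, ← Pi.single_smul, smul_eq_mul, mul_one]

section UnconditionalFrame

variable {n m : ℕ} {p : Seminorm ℂ (Fin n → ℂ)} (hp : ∀ z, p z = 0 → z = 0)

theorem glWith_polySeminorm_le_of_factorization
    (huncond : ∀ ε z : Fin n → ℂ, (∀ i, ‖ε i‖ ≤ 1) → p (fun i => ε i * z i) ≤ p z)
    {s : Finset { z // p z ≤ 1 }} (W : (s → ℂ) →ₗ[ℂ] Coef n m) {c : ℝ} (hc : 0 < c)
    (hWs : ∀ a, W (fun x => evalC a x.1) = a) (hW : ∀ y, polyNorm n m p (W y) ≤ c * ‖y‖) :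
    glWith (Coef n (m + 1)) (polySeminorm hp (m + 1)) ≤ c * Real.exp 1 := by
  classical
  let φ (i : Fin n × s) : Coef n (m + 1) →ₗ[ℂ] ℂ :=
    (m + 1 : ℂ)⁻¹ • Coef.evalₗ i.2.1.1 ∘ₗ Coef.pderiv i.1
  have hφ (i a) : φ i a = (m + 1 : ℂ)⁻¹ * evalC (Coef.pderiv i.1 a) i.2.1.1 := by
    rw [← Coef.evalₗ_apply]; rfl
  have recombine (y : Fin n × s → ℂ) :
      ∑ i, y i • Coef.mulX i.1 (W (Pi.single i.2 1)) = ∑ k, Coef.mulX k (W fun j => y (k, j)) :=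
    sum_smul_apply_single_prod (fun k => Coef.mulX k ∘ₗ W) y
  refine glWith_le_of_unconditional_frame (eq_zero_of_polySeminorm_eq_zero hp) φ
    (fun i => Coef.mulX i.1 (W (Pi.single i.2 1))) (by positivity) (fun a => ?_) fun a ha ε hε => ?_
  · have hWφ (k) : W (fun x => φ (k, x) a) = (m + 1 : ℂ)⁻¹ • Coef.pderiv k a := by
      conv_rhs => rw [← hWs (Coef.pderiv k a), ← map_smul]
      simp only [hφ, Pi.smul_def, smul_eq_mul]
    rw [recombine fun i => φ i a]
    simp only [hWφ, map_smul, ← smul_sum, Coef.sum_mulX_pderiv]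
    rw [← Nat.cast_smul_eq_nsmul ℂ, Nat.cast_succ, inv_smul_smul₀ (Nat.cast_add_one_ne_zero m)]
  · rw [coe_polySeminorm] at ha ⊢
    simp only [smul_smul]
    rw [recombine fun i => ε i * φ i a]
    refine polyNorm_sum_mulX_le hp W (Real.exp_pos 1).le hc.le hW _ fun z hz x => ?_
    have move_signs : ∑ k, z k * (ε (k, x) * φ (k, x) a) =
        (m + 1 : ℂ)⁻¹ * ∑ k, ε (k, x) * z k * evalC (Coef.pderiv k a) x.1 := by
      rw [mul_sum]
      exact sum_congr rfl fun k _ => by rw [hφ]; ring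
    have bernstein := norm_sum_mul_evalC_pderiv_le hp a x.1.2
      ((huncond (fun k => ε (k, x)) z fun k => hε (k, x)).trans hz)
    rw [move_signs, norm_mul, norm_inv, ← Nat.cast_succ, Complex.norm_natCast,
      inv_mul_le_iff₀ (by positivity), Nat.cast_succ]
    refine bernstein.trans ?_
    gcongr
    exact mul_le_of_le_one_right (Real.exp_pos 1).le ha

end UnconditionalFrame

lemma two_le_pow_self_div_factorial {m : ℕ} (hm : 2 ≤ m) : (2 : ℝ) ≤ m ^ m / m.factorial := by
  rw [le_div_iff₀ (by positivity)]
  suffices 2 * m.factorial ≤ m ^ m by exact_mod_cast this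
  induction m, hm using Nat.le_induction with
  | base => decide
  | succ k _ ih =>
    calc 2 * (k + 1).factorial = 2 * k.factorial * (k + 1) := by rw [Nat.factorial_succ]; ring
      _ ≤ (k + 1) ^ k * (k + 1) := by gcongr; exact ih.trans (Nat.pow_le_pow_left k.le_succ k)
      _ = (k + 1) ^ (k + 1) := (pow_succ _ _).symm

lemma exp_one_le_two_mul_sq {m : ℕ} (hm : 2 ≤ m) :
    Real.exp 1 ≤ 2 * ((m : ℝ) ^ m / m.factorial) ^ 2 := by
  nlinarith [two_le_pow_self_div_factorial hm, Real.exp_one_lt_d9]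

theorem gl_le_projection_constant_general (n m : ℕ) (ν : (Fin n → ℂ) → ℝ)
    (hadd : ∀ z w, ν (z + w) ≤ ν z + ν w)
    (hsmul : ∀ (c : ℂ) (z), ν (c • z) = ‖c‖ * ν z)
    (hdef : ∀ z, ν z = 0 → z = 0)
    (huncond : ∀ (ε z : Fin n → ℂ), (∀ i, ‖ε i‖ ≤ 1) → ν (fun i => ε i * z i) ≤ ν z) :
    glWith (Coef n (m + 1)) (polyNorm n (m + 1) ν) ≤
      Real.exp 1 * projConstWith (Coef n m) (polyNorm n m ν) := by
  let p : Seminorm ℂ (Fin n → ℂ) := Seminorm.of ν hadd hsmul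
  have hp : ∀ z, p z = 0 → z = 0 := hdef
  rw [← div_le_iff₀' (Real.exp_pos 1)]
  refine le_of_forall_gt_imp_ge_of_dense fun c hc => ?_
  rw [div_le_iff₀ (Real.exp_pos 1)]
  obtain ⟨s, W, hWs, hW⟩ := exists_factorization_of_projConstWith_lt (q := polySeminorm hp m)
    (eq_zero_of_polySeminorm_eq_zero hp) (I := ballEval hp) (fun _ => rfl)
    (by rwa [coe_polySeminorm])
  simp only [ballEval_apply] at hWs
  rw [coe_polySeminorm] at hW
  have := glWith_polySeminorm_le_of_factorization hp huncond W
    ((projConstWith_nonneg _).trans_lt hc) hWs hW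
  rwa [coe_polySeminorm] at this

/-- For `X_n = (ℂ^n, ν)` with 1-unconditional standard basis and `m ≥ 2`,
`gl(𝒫(^m X_n)) ≤ 2 · (m^m/m!)² · λ(𝒫(^{m-1} X_n))`. -/
theorem gl_le_projection_constant (n m : ℕ) (hn : 0 < n) (hm : 2 ≤ m)
    (ν : (Fin n → ℂ) → ℝ)
    (hadd : ∀ z w, ν (z + w) ≤ ν z + ν w)
    (hsmul : ∀ (c : ℂ) (z), ν (c • z) = ‖c‖ * ν z)
    (hdef : ∀ z, ν z = 0 → z = 0)
    (huncond : ∀ (ε z : Fin n → ℂ), (∀ i, ‖ε i‖ ≤ 1) → ν (fun i => ε i * z i) ≤ ν z) :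
    glWith (Coef n m) (polyNorm n m ν)
      ≤ 2 * ((m : ℝ) ^ m / (Nat.factorial m : ℝ)) ^ 2 *
          projConstWith (Coef n (m - 1)) (polyNorm n (m - 1) ν) := by
  obtain ⟨k, rfl⟩ : ∃ k, m = k + 1 := ⟨m - 1, by omega⟩
  exact (gl_le_projection_constant_general n k ν hadd hsmul hdef huncond).trans
    (mul_le_mul_of_nonneg_right (exp_one_le_two_mul_sq hm) (projConstWith_nonneg _))
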